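/- In the Maker-Breaker Perfect Matching game on E(K_n) with n even (winning sets: perfect matchings of K_n), Maker wins as first or second player if and only if n ≥ 6, except that Maker also wins as first player when n = 2. -/

import Mathlib

/-- `MakerWins X F t M B` : in the Maker-Breaker positional game on board `X` with
winning sets `F`, from the position where Maker has claimed the elements of `M`,
Breaker has claimed the elements of `B`, and it is Maker's turn iff `t = true`,
Maker has a winning strategy (he can ensure to claim all elements of some winning set). -/
inductive MakerWins {α : Type} [DecidableEq α] (X : Finset α) (F : Set (Finset α)) :
    Bool → Finset α → Finset α → Prop
  | claim {t : Bool} {M B : Finset α} (A : Finset α) (hA : A ∈ F) (hAM : A ⊆ M) :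
      MakerWins X F t M B
  | makerMove {M B : Finset α} (e : α) (he : e ∈ X) (heM : e ∉ M) (heB : e ∉ B)
      (h : MakerWins X F false (insert e M) B) : MakerWins X F true M B
  | breakerMove {M B : Finset α} (e : α) (he : e ∈ X) (heM : e ∉ M) (heB : e ∉ B)
      (h : ∀ f ∈ X, f ∉ M → f ∉ B → MakerWins X F true M (insert f B)) :
      MakerWins X F false M B

/-- Maker, moving first, has a winning strategy in the game `(X, F)`. -/
def MakerWinsFirst {α : Type} [DecidableEq α] (X : Finset α) (F : Set (Finset α)) : Prop :=
  MakerWins X F true ∅ ∅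

/-- Maker, moving second (Breaker moves first), has a winning strategy in `(X, F)`. -/
def MakerWinsSecond {α : Type} [DecidableEq α] (X : Finset α) (F : Set (Finset α)) : Prop :=
  MakerWins X F false ∅ ∅

/-- The board of games played on the edge set of the complete graph `K_n`. -/
def Board (n : ℕ) : Finset (Sym2 (Fin n)) := (⊤ : SimpleGraph (Fin n)).edgeFinset

/-- Edge sets of Hamiltonian cycles of `K_n`: the winning sets of the Hamiltonicity game. -/
def HamCycles (n : ℕ) : Set (Finset (Sym2 (Fin n))) :=
  {H | ∃ (a : Fin n) (p : (⊤ : SimpleGraph (Fin n)).Walk a a),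
    p.IsHamiltonianCycle ∧ H = p.edges.toFinset}

/-- Edge sets of Hamiltonian paths of `K_n`: the winning sets of the Hamiltonian Path game. -/
def HamPaths (n : ℕ) : Set (Finset (Sym2 (Fin n))) :=
  {H | ∃ (a b : Fin n) (p : (⊤ : SimpleGraph (Fin n)).Walk a b),
    p.IsHamiltonian ∧ H = p.edges.toFinset}

/-- Edge sets of Hamiltonian paths of `K_n` with endpoints `u` and `v`:
the winning sets of the Fixed Hamiltonian Path game. -/
def FixedHamPaths (n : ℕ) (u v : Fin n) : Set (Finset (Sym2 (Fin n))) :=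
  {H | ∃ p : (⊤ : SimpleGraph (Fin n)).Walk u v, p.IsHamiltonian ∧ H = p.edges.toFinset}

/-- Winning sets of the Perfect Matching game on `K_n`: perfect matchings, i.e. sets of
non-loop edges such that every vertex lies in exactly one of them. -/
def PerfectMatchings (n : ℕ) : Set (Finset (Sym2 (Fin n))) :=
  {H | (∀ e ∈ H, ¬ e.IsDiag) ∧ ∀ v : Fin n, ∃! e, e ∈ H ∧ v ∈ e}

/-! On four vertices the three perfect matchings are disjoint pairs of edges, so Breaker answers
each edge of Maker by the other edge of its matching. On six vertices, after Breaker's first edge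
`xy` Maker claims edges `xz` and `xw`. To each remaining vertex `v`, with `p`, `q` the other two,
belong the edges `pq`, `zv`, `wv`; these three triples are disjoint and miss `xy`, so Breaker's
two further edges leave some triple free, and by claiming `pq` Maker threatens both `wv` and `zv`.
On `n ≥ 8` vertices Maker answers Breaker's edge `xy` by an edge `xz` and plays on the other
`n - 2` vertices. -/

namespace MakerWins

variable {α : Type} [DecidableEq α] {X X' : Finset α} {F F' : Set (Finset α)} {t t' : Bool}
  {M M' B B' : Finset α}

theorem exists_subset_union_sdiff (h : MakerWins X F t M B) : ∃ A ∈ F, A ⊆ M ∪ X \ B := by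
  induction h with
  | claim A hA hAM => exact ⟨A, hA, hAM.trans Finset.subset_union_left⟩
  | makerMove e _ _ heB _ ih =>
    obtain ⟨A, hA, hsub⟩ := ih
    exact ⟨A, hA, by grind⟩
  | breakerMove e he heM heB _ ih =>
    obtain ⟨A, hA, hsub⟩ := ih e he heM heB
    exact ⟨A, hA, by grind⟩

theorem mono (h : MakerWins X F t M B) (hX : X ⊆ X') (ht : t ≤ t') (hM : M ⊆ M')
    (hB : X ∩ B' ⊆ B) (hF : ∀ A ∈ F, ∃ A' ∈ F', A' ⊆ A ∪ M') : MakerWins X' F' t' M' B' := by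
  have hinsert {f : α} {M' : Finset α} (hF : ∀ A ∈ F, ∃ A' ∈ F', A' ⊆ A ∪ M') :
      ∀ A ∈ F, ∃ A' ∈ F', A' ⊆ A ∪ insert f M' := fun A hA =>
    (hF A hA).imp fun A' h => ⟨h.1, h.2.trans (by grind)⟩
  induction h generalizing t' M' B' with
  | claim A hA hAM =>
    obtain ⟨A', hA', hsub⟩ := hF A hA
    exact claim A' hA' (by grind)
  | makerMove e he _ heB _ ih =>
    obtain rfl : t' = true := top_le_iff.1 ht
    by_cases heM' : e ∈ M'
    · exact ih (by simp) (by grind) hB hF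
    · exact makerMove e (hX he) heM' (by grind)
        (ih le_rfl (Finset.insert_subset_insert e hM) hB (hinsert hF))
  | @breakerMove M B e he heM heB h ih =>
    cases t' with
    | true => exact ih e he heM heB le_rfl hM (by grind) hF
    | false =>
      by_cases hfree : ∃ x ∈ X', x ∉ M' ∧ x ∉ B'
      · obtain ⟨x, hx, hxM, hxB⟩ := hfree
        refine breakerMove x hx hxM hxB fun f _ hfM _ => ?_
        by_cases hf : f ∈ X ∧ f ∉ B
        · exact ih f hf.1 (fun hfM₀ => hfM (hM hfM₀)) hf.2 le_rfl hM (by grind) hF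
        · -- A move wasted in the game on `X` is read there as Breaker claiming `e`.
          exact ih e he heM heB le_rfl hM (by grind) hF
      · obtain ⟨A, hA, hsub⟩ := (breakerMove e he heM heB h).exists_subset_union_sdiff
        obtain ⟨A', hA', hsub'⟩ := hF A hA
        exact claim A' hA' (by grind)

theorem of_threat {a : α} (ha : a ∈ X) (haB : a ∉ B) {A : Finset α} (hA : A ∈ F)
    (hAM : A ⊆ insert a M) : MakerWins X F true M B := by
  by_cases haM : a ∈ M
  · exact claim A hA (by rwa [Finset.insert_eq_of_mem haM] at hAM)
  · exact makerMove a ha haM haB (claim A hA hAM)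

theorem of_forall_insert (hne : (X \ M).Nonempty)
    (h : ∀ f ∈ X, f ∉ M → MakerWins X F true M (insert f B)) : MakerWins X F false M B := by
  by_cases hfree : ∃ e ∈ X, e ∉ M ∧ e ∉ B
  · obtain ⟨e, he, heM, heB⟩ := hfree
    exact breakerMove e he heM heB fun f hf hfM _ => h f hf hfM
  · obtain ⟨e, he⟩ := hne
    rw [Finset.mem_sdiff] at he
    obtain ⟨A, hA, hsub⟩ := (h e he.1 he.2).exists_subset_union_sdiff
    exact claim A hA (by grind)

theorem of_two_threats {a b : α} (hab : a ≠ b) (ha : a ∈ X) (haB : a ∉ B) (hb : b ∈ X)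
    (hbB : b ∉ B) {A A' : Finset α} (hA : A ∈ F) (hAM : A ⊆ insert a M) (hA' : A' ∈ F)
    (hAM' : A' ⊆ insert b M) : MakerWins X F false M B := by
  by_cases haM : a ∈ M
  · exact claim A hA (by rwa [Finset.insert_eq_of_mem haM] at hAM)
  refine of_forall_insert ⟨a, Finset.mem_sdiff.2 ⟨ha, haM⟩⟩ fun f _ _ => ?_
  by_cases hf : f = a
  · exact of_threat hb (by grind) hA' hAM'
  · exact of_threat ha (by grind) hA hAM

/- Maker holds at most one element `e` outside `M₀`, and none when it is his turn; Breaker answers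
`e` inside the unblocked winning set containing it, of which there is at most one. -/
theorem false_of_pairwiseDisjoint (h : MakerWins X F t M B) (hX : ∀ A ∈ F, A ⊆ X)
    (hdisj : F.PairwiseDisjoint id) (hF : ∀ A ∈ F, A.Nontrivial) {M₀ : Finset α} {e : α}
    (hMB : Disjoint M B) (hM₀ : ∀ A ∈ F, Disjoint A B → Disjoint A M₀) (hM : M ⊆ insert e M₀)
    (ht : t = true → M ⊆ M₀) : False := by
  induction h generalizing M₀ e with
  | claim A hA hAM =>
    have hAM₀ : Disjoint A M₀ := hM₀ A hA (hMB.mono_left hAM)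
    obtain ⟨a, ha, hae⟩ := (hF A hA).exists_ne e
    exact Finset.disjoint_left.1 hAM₀ ha (by grind)
  | makerMove a _ _ haB _ ih =>
    exact ih (Finset.disjoint_insert_left.2 ⟨haB, hMB⟩) hM₀
      (Finset.insert_subset_insert a (ht rfl)) (by simp)
  | @breakerMove M B a ha haM haB _ ih =>
    by_cases hA : ∃ A ∈ F, Disjoint A B ∧ ¬ Disjoint A M
    · obtain ⟨A, hA, hAB, hAM⟩ := hA
      have mem_of_touched {A : Finset α} (hA : A ∈ F) (hAB : Disjoint A B)
          (hAM : ¬ Disjoint A M) : e ∈ A := by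
        have := hM₀ A hA hAB
        grind [Finset.disjoint_left]
      have heA : e ∈ A := mem_of_touched hA hAB hAM
      obtain ⟨b, hb, hbe⟩ := (hF A hA).exists_ne e
      have hbM : b ∉ M := by
        have := hM₀ A hA hAB
        grind [Finset.disjoint_left]
      refine ih b (hX A hA hb) hbM (Finset.disjoint_left.1 hAB hb) (M₀ := M) (e := e)
        (Finset.disjoint_insert_right.2 ⟨hbM, hMB⟩) (fun A' hA' hA'B => ?_)
        (Finset.subset_insert e M) fun _ => subset_rfl
      rw [Finset.disjoint_insert_right] at hA'B
      by_contra hA'M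
      have heA' : e ∈ A' := mem_of_touched hA' hA'B.2 hA'M
      obtain rfl : A = A' := hdisj.elim_finset hA hA' e heA heA'
      exact hA'B.1 hb
    · refine ih a ha haM haB (M₀ := M) (e := e) (Finset.disjoint_insert_right.2 ⟨haM, hMB⟩)
        (fun A hAF hAB => ?_) (Finset.subset_insert e M) fun _ => subset_rfl
      by_contra hAM
      exact hA ⟨A, hAF, (Finset.disjoint_insert_right.1 hAB).2, hAM⟩

end MakerWins

section Games

variable {α : Type} [DecidableEq α] {X : Finset α} {F : Set (Finset α)}

theorem MakerWinsSecond.makerWinsFirst (h : MakerWinsSecond X F) : MakerWinsFirst X F :=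
  MakerWins.mono h subset_rfl (by simp) subset_rfl (by simp)
    fun A hA => ⟨A, hA, Finset.subset_union_left⟩

theorem not_makerWinsSecond_of_forall_mem {e : α} (he : e ∈ X) (hF : ∀ A ∈ F, e ∈ A) :
    ¬ MakerWinsSecond X F := by
  intro h
  cases h with
  | claim A hA hAM => simpa using hAM (hF A hA)
  | breakerMove _ _ _ _ h =>
    obtain ⟨A, hA, hsub⟩ := (h e he (by simp) (by simp)).exists_subset_union_sdiff
    simpa using hsub (hF A hA)

theorem not_makerWinsFirst_of_pairwiseDisjoint (hX : ∀ A ∈ F, A ⊆ X)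
    (hdisj : F.PairwiseDisjoint id) (hF : ∀ A ∈ F, A.Nontrivial) : ¬ MakerWinsFirst X F := by
  intro h
  obtain ⟨A, hA, -⟩ := h.exists_subset_union_sdiff
  obtain ⟨e, -⟩ := (hF A hA).nonempty
  exact h.false_of_pairwiseDisjoint hX hdisj hF (M₀ := ∅) (e := e) (by simp) (by simp) (by simp)
    (by simp)

end Games

theorem exists_disjoint_of_pairwiseDisjoint {ι α : Type*} {s : Finset ι}
    {T : ι → Finset α} {B : Finset α} (hT : (s : Set ι).PairwiseDisjoint T)
    (hB : B.card < s.card) : ∃ i ∈ s, Disjoint (T i) B := by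
  classical
  by_contra! hmeet
  have hle : s.card ≤ (s.biUnion fun i => T i ∩ B).card :=
    Finset.card_le_card_biUnion (fun i hi j hj hij =>
      (hT hi hj hij).mono Finset.inter_subset_left Finset.inter_subset_left)
      fun i hi => Finset.not_disjoint_iff_nonempty_inter.1 (hmeet i hi)
  have hsub : (s.biUnion fun i => T i ∩ B) ⊆ B :=
    Finset.biUnion_subset.2 fun i _ => Finset.inter_subset_right
  exact hB.not_ge (hle.trans (Finset.card_le_card hsub))

section CompleteGraph

variable {V : Type} [DecidableEq V] {S : Finset V} {H : Finset (Sym2 V)} {e : Sym2 V}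
  {a b c d p q x y z w : V}

/-- The edge set of the complete graph on the vertex set `S`. Letting `S` vary inside a fixed type
makes the passage to fewer vertices an inclusion of boards. -/
def edgesOn (S : Finset V) : Finset (Sym2 V) :=
  {e ∈ S.sym2 | ¬ e.IsDiag}

/-- The perfect matchings of the complete graph on the vertex set `S`, as edge sets. -/
def perfectMatchingsOn (S : Finset V) : Set (Finset (Sym2 V)) :=
  {H | H ⊆ edgesOn S ∧ ∀ v ∈ S, ∃! e, e ∈ H ∧ v ∈ e}

theorem mem_edgesOn : e ∈ edgesOn S ↔ (∀ v ∈ e, v ∈ S) ∧ ¬ e.IsDiag := by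
  simp [edgesOn, Finset.mem_sym2_iff]

theorem mk_mem_edgesOn : s(a, b) ∈ edgesOn S ↔ (a ∈ S ∧ b ∈ S) ∧ a ≠ b := by
  simp [edgesOn]

theorem edgesOn_mono {T : Finset V} (h : T ⊆ S) : edgesOn T ⊆ edgesOn S :=
  Finset.filter_subset_filter _ (Finset.sym2_mono h)

theorem card_edgesOn (S : Finset V) : (edgesOn S).card = S.card.choose 2 := by
  rw [edgesOn, Finset.sym2_eq_image, Sym2.filter_image_mk_not_isDiag, Sym2.card_image_offDiag]

theorem two_mul_card_of_mem_perfectMatchingsOn (hH : H ∈ perfectMatchingsOn S) :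
    2 * H.card = S.card := by
  have hedge : ∀ e ∈ H, (Finset.bipartiteAbove (fun e v => v ∈ e) S e).card = 2 := fun e he => by
    obtain ⟨heS, hdiag⟩ := mem_edgesOn.1 (hH.1 he)
    rw [← Sym2.card_toFinset_of_not_isDiag e hdiag]
    congr 1
    ext v
    simpa [Finset.mem_bipartiteAbove] using heS v
  have hvertex : ∀ v ∈ S, (Finset.bipartiteBelow (fun e v => v ∈ e) H v).card = 1 := fun v hv => by
    simpa [Finset.card_eq_one, Finset.bipartiteBelow, Finset.eq_singleton_iff_unique_mem,
      ExistsUnique] using hH.2 v hv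
  simpa [mul_comm] using Finset.card_mul_eq_card_mul (fun (e : Sym2 V) v => v ∈ e) hedge hvertex

theorem subset_insert_edgesOn_of_mem_perfectMatchingsOn (hH : H ∈ perfectMatchingsOn S)
    (he : e ∈ H) : H ⊆ insert e (edgesOn (S \ e.toFinset)) := by
  intro e' he'
  obtain ⟨he'S, hdiag⟩ := mem_edgesOn.1 (hH.1 he')
  refine Finset.mem_insert.2 (or_iff_not_imp_left.2 fun hne =>
    mem_edgesOn.2 ⟨fun v hv => ?_, hdiag⟩)
  refine Finset.mem_sdiff.2 ⟨he'S v hv, fun hve => hne ?_⟩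
  exact (hH.2 v (he'S v hv)).unique ⟨he', hv⟩ ⟨he, Sym2.mem_toFinset.1 hve⟩

theorem insert_mem_perfectMatchingsOn (hH : H ∈ perfectMatchingsOn S) (ha : a ∉ S) (hb : b ∉ S)
    (hab : a ≠ b) : insert s(a, b) H ∈ perfectMatchingsOn (insert a (insert b S)) := by
  have hsub : ∀ e ∈ H, ∀ v ∈ e, v ∈ S := fun e he => (mem_edgesOn.1 (hH.1 he)).1
  refine ⟨Finset.insert_subset (mk_mem_edgesOn.2 (by simp [hab]))
    (hH.1.trans (edgesOn_mono (by grind))), fun v hv => ?_⟩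
  by_cases hvS : v ∈ S
  · obtain ⟨e, he, huniq⟩ := hH.2 v hvS
    refine ⟨e, ⟨Finset.mem_insert_of_mem he.1, he.2⟩, fun e' he' => ?_⟩
    have : v ∉ s(a, b) := by grind
    grind
  · refine ⟨s(a, b), ⟨Finset.mem_insert_self _ _, by grind⟩, fun e' he' => ?_⟩
    grind

theorem empty_mem_perfectMatchingsOn_empty :
    (∅ : Finset (Sym2 V)) ∈ perfectMatchingsOn (∅ : Finset V) := by
  simp [perfectMatchingsOn]

theorem triple_mem_perfectMatchingsOn (h : [a, b, c, d, p, q].Nodup) :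
    {s(a, b), s(c, d), s(p, q)} ∈ perfectMatchingsOn {a, b, c, d, p, q} := by
  simp only [List.nodup_cons, List.mem_cons, List.not_mem_nil, or_false, not_or] at h
  have hpq : {s(p, q)} ∈ perfectMatchingsOn {p, q} :=
    insert_mem_perfectMatchingsOn empty_mem_perfectMatchingsOn_empty (by simp) (by simp) (by grind)
  have hcd : {s(c, d), s(p, q)} ∈ perfectMatchingsOn {c, d, p, q} :=
    insert_mem_perfectMatchingsOn hpq (by grind) (by grind) (by grind)
  exact insert_mem_perfectMatchingsOn hcd (by grind) (by grind) (by grind)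

theorem perfectMatchingsOn_of_card_eq_two (hS : S.card = 2) :
    perfectMatchingsOn S = {edgesOn S} := by
  refine Set.eq_singleton_iff_nonempty_unique_mem.2 ⟨?_, fun H hH => ?_⟩
  · obtain ⟨a, b, hab, rfl⟩ := Finset.card_eq_two.1 hS
    exact ⟨_, insert_mem_perfectMatchingsOn empty_mem_perfectMatchingsOn_empty (by simp) (by simp)
      hab⟩
  · have hcard : 2 * H.card = 2 := hS ▸ two_mul_card_of_mem_perfectMatchingsOn hH
    refine Finset.eq_of_subset_of_card_le hH.1 ?_
    rw [card_edgesOn, hS, Nat.choose_self]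
    omega

theorem makerWinsFirst_of_card_eq_two (hS : S.card = 2) :
    MakerWinsFirst (edgesOn S) (perfectMatchingsOn S) := by
  rw [perfectMatchingsOn_of_card_eq_two hS]
  obtain ⟨e, he⟩ : ∃ e, edgesOn S = {e} := Finset.card_eq_one.1 (by simp [card_edgesOn, hS])
  exact MakerWins.of_threat (a := e) (by simp [he]) (by simp) rfl (by simp [he])

theorem not_makerWinsSecond_of_card_eq_two (hS : S.card = 2) :
    ¬ MakerWinsSecond (edgesOn S) (perfectMatchingsOn S) := by
  obtain ⟨e, he⟩ : ∃ e, edgesOn S = {e} := Finset.card_eq_one.1 (by simp [card_edgesOn, hS])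
  exact not_makerWinsSecond_of_forall_mem (e := e) (by simp [he])
    (by simp [perfectMatchingsOn_of_card_eq_two hS, he])

theorem eq_insert_edgesOn_of_mem_perfectMatchingsOn (hS : S.card = 4)
    (hH : H ∈ perfectMatchingsOn S) (he : e ∈ H) : H = insert e (edgesOn (S \ e.toFinset)) := by
  refine Finset.eq_of_subset_of_card_le
    (subset_insert_edgesOn_of_mem_perfectMatchingsOn hH he) ?_
  have hHcard : 2 * H.card = 4 := hS ▸ two_mul_card_of_mem_perfectMatchingsOn hH
  obtain ⟨heS, hdiag⟩ := mem_edgesOn.1 (hH.1 he)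
  have hrest : (S \ e.toFinset).card = 2 := by
    rw [Finset.card_sdiff_of_subset fun v hv => heS v (Sym2.mem_toFinset.1 hv), hS,
      Sym2.card_toFinset_of_not_isDiag e hdiag]
  have hle := Finset.card_insert_le e (edgesOn (S \ e.toFinset))
  rw [card_edgesOn, hrest, Nat.choose_self] at hle
  omega

theorem not_makerWinsFirst_of_card_eq_four (hS : S.card = 4) :
    ¬ MakerWinsFirst (edgesOn S) (perfectMatchingsOn S) := by
  refine not_makerWinsFirst_of_pairwiseDisjoint (fun H hH => hH.1) (fun H hH H' hH' hne => ?_)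
    fun H hH => ?_
  · refine Finset.disjoint_left.2 fun e he he' => hne ?_
    rw [eq_insert_edgesOn_of_mem_perfectMatchingsOn hS hH he,
      eq_insert_edgesOn_of_mem_perfectMatchingsOn hS hH' he']
  · have := two_mul_card_of_mem_perfectMatchingsOn hH
    exact Finset.one_lt_card_iff_nontrivial.1 (by omega)

theorem makerWinsSecond_of_adjacent_reply {F : Set (Finset (Sym2 V))} (hS : 3 ≤ S.card)
    (h : ∀ x ∈ S, ∀ y ∈ S, ∀ z ∈ S, x ≠ y → x ≠ z → y ≠ z →
      MakerWins (edgesOn S) F false {s(x, z)} {s(x, y)}) : MakerWinsSecond (edgesOn S) F := by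
  refine MakerWins.of_forall_insert ?_ fun f hf _ => ?_
  · rw [Finset.sdiff_empty, ← Finset.card_pos, card_edgesOn]
    exact Nat.choose_pos (by omega)
  · induction f with | _ x y
    obtain ⟨⟨hx, hy⟩, hxy⟩ := mk_mem_edgesOn.1 hf
    obtain ⟨z, hz, hz'⟩ : ∃ z ∈ S, z ∉ ({x, y} : Finset V) :=
      Finset.exists_mem_notMem_of_card_lt_card (Finset.card_le_two.trans_lt hS)
    simp only [Finset.mem_insert, Finset.mem_singleton, not_or] at hz'
    exact .makerMove s(x, z) (mk_mem_edgesOn.2 ⟨⟨hx, hz⟩, Ne.symm hz'.1⟩) (by simp) (by grind)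
      (h x hx y hy z hz hxy (Ne.symm hz'.1) (Ne.symm hz'.2))

theorem makerWins_of_cherry_of_notMem {B : Finset (Sym2 V)} (h : [x, z, w, v, p, q].Nodup)
    (hpq : s(p, q) ∉ B) (hzv : s(z, v) ∉ B) (hwv : s(w, v) ∉ B) :
    MakerWins (edgesOn {x, z, w, v, p, q}) (perfectMatchingsOn {x, z, w, v, p, q}) true
      {s(x, z), s(x, w)} B := by
  have hxz : {s(x, z), s(w, v), s(p, q)} ∈ perfectMatchingsOn {x, z, w, v, p, q} :=
    triple_mem_perfectMatchingsOn h
  have hxw : {s(x, w), s(z, v), s(p, q)} ∈ perfectMatchingsOn {x, z, w, v, p, q} := by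
    rw [Finset.insert_comm z w]
    exact triple_mem_perfectMatchingsOn ((List.Perm.swap w z _).cons x |>.nodup h)
  simp only [List.nodup_cons, List.mem_cons, List.not_mem_nil, or_false, not_or] at h
  refine .makerMove s(p, q) (hxz.1 (by simp)) (by grind) hpq ?_
  exact .of_two_threats (a := s(w, v)) (b := s(z, v)) (by grind) (hxz.1 (by simp)) hwv
    (hxw.1 (by simp)) hzv hxz (by grind) hxw (by grind)

/-- The three edges that Maker, holding the edges from `x` to `z` and to `w`, needs for his double
threat at `v`; here `R` is the set of the remaining three vertices. -/
def doubleThreatEdges (z w : V) (R : Finset V) (v : V) : Finset (Sym2 V) :=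
  insert s(z, v) (insert s(w, v) (edgesOn (R.erase v)))

theorem pairwiseDisjoint_doubleThreatEdges {R : Finset V} (hR : R.card = 3) (hz : z ∉ R)
    (hw : w ∉ R) (hzw : z ≠ w) : (R : Set V).PairwiseDisjoint (doubleThreatEdges z w R) := by
  intro u hu v hv huv
  rw [Finset.mem_coe] at hu hv
  have hcard : ((R.erase u).erase v).card = 1 := by
    rw [Finset.card_erase_of_mem (by grind), Finset.card_erase_of_mem hu, hR]
  have hrest : Disjoint (edgesOn (R.erase u)) (edgesOn (R.erase v)) := by
    refine Finset.disjoint_left.2 fun e heu hev => ?_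
    induction e with | _ a b
    rw [mk_mem_edgesOn] at heu hev
    exact heu.2 (Finset.card_le_one.1 hcard.le a (by grind) b (by grind))
  have hedge {t r : V} (ht : t ∉ R) (a : V) : s(t, r) ∉ edgesOn (R.erase a) := fun he =>
    ht (Finset.mem_of_mem_erase (mk_mem_edgesOn.1 he).1.1)
  simp only [Function.onFun, doubleThreatEdges, Finset.disjoint_insert_left,
    Finset.disjoint_insert_right, Finset.mem_insert, not_or]
  have hne : s(z, u) ≠ s(z, v) ∧ s(z, u) ≠ s(w, v) ∧ s(z, v) ≠ s(w, u) ∧ s(w, u) ≠ s(w, v) := by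
    grind
  grind

theorem doubleThreatEdges_subset_edgesOn_erase {R : Finset V} (hR : R ⊆ S.erase x)
    (hz : z ∈ S.erase x) (hw : w ∈ S.erase x) (hzR : z ∉ R) (hwR : w ∉ R) (hv : v ∈ R) :
    doubleThreatEdges z w R v ⊆ edgesOn (S.erase x) := by
  refine Finset.insert_subset ?_ (Finset.insert_subset ?_ ?_)
  · exact mk_mem_edgesOn.2 ⟨⟨hz, hR hv⟩, by grind⟩
  · exact mk_mem_edgesOn.2 ⟨⟨hw, hR hv⟩, by grind⟩
  · exact edgesOn_mono ((Finset.erase_subset v R).trans hR)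

theorem makerWins_of_cherry {B : Finset (Sym2 V)} (hS : S.card = 6) (hx : x ∈ S) (hz : z ∈ S)
    (hw : w ∈ S) (hxz : x ≠ z) (hxw : x ≠ w) (hzw : z ≠ w)
    (hB : (B ∩ edgesOn (S.erase x)).card ≤ 2) :
    MakerWins (edgesOn S) (perfectMatchingsOn S) true {s(x, z), s(x, w)} B := by
  obtain ⟨R, hRdef⟩ : ∃ R, R = S \ {x, z, w} := ⟨_, rfl⟩
  have hR : R.card = 3 := by
    rw [hRdef, Finset.card_sdiff_of_subset (by grind), hS,
      Finset.card_eq_three.2 ⟨x, z, w, hxz, hxw, hzw, rfl⟩]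
  obtain ⟨v, hv, hfree⟩ : ∃ v ∈ R,
      Disjoint (doubleThreatEdges z w R v) (B ∩ edgesOn (S.erase x)) :=
    exists_disjoint_of_pairwiseDisjoint
      (pairwiseDisjoint_doubleThreatEdges hR (by grind) (by grind) hzw) (by omega)
  obtain ⟨p, q, hpq, hrest⟩ : ∃ p q, p ≠ q ∧ R.erase v = {p, q} :=
    Finset.card_eq_two.1 (by rw [Finset.card_erase_of_mem hv, hR])
  have hnotMem : ∀ e ∈ doubleThreatEdges z w R v, e ∉ B := fun e he heB =>
    Finset.disjoint_left.1 hfree he (Finset.mem_inter.2 ⟨heB,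
      doubleThreatEdges_subset_edgesOn_erase (by grind) (by grind) (by grind) (by grind)
        (by grind) hv he⟩)
  obtain rfl : {x, z, w, v, p, q} = S := by
    rw [← hrest, Finset.insert_erase hv, hRdef]
    grind
  refine makerWins_of_cherry_of_notMem ?_ (hnotMem _ ?_) (hnotMem _ ?_) (hnotMem _ ?_)
  · simp only [List.nodup_cons, List.mem_cons, List.not_mem_nil, or_false, not_or]
    grind
  · simp [doubleThreatEdges, hrest, mk_mem_edgesOn, hpq]
  · simp [doubleThreatEdges]
  · simp [doubleThreatEdges]

theorem makerWinsSecond_of_card_eq_six (hS : S.card = 6) :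
    MakerWinsSecond (edgesOn S) (perfectMatchingsOn S) := by
  refine makerWinsSecond_of_adjacent_reply (by omega) fun x hx y hy z hz hxy hxz hyz => ?_
  have hxyS : s(x, y) ∈ edgesOn S := mk_mem_edgesOn.2 ⟨⟨hx, hy⟩, hxy⟩
  refine .of_forall_insert ⟨s(x, y), by grind⟩ fun f _ _ => ?_
  obtain ⟨w, hw, hwf⟩ : ∃ w ∈ S \ {x, y, z}, s(x, w) ≠ f := by
    by_contra! hall
    have hle : (S \ {x, y, z}).card ≤ 1 := Finset.card_le_one.2 fun u hu v hv =>
      Sym2.congr_right.1 ((hall u hu).trans (hall v hv).symm)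
    have := Finset.le_card_sdiff {x, y, z} S
    have := Finset.card_le_three (a := x) (b := y) (c := z)
    omega
  have hxwS : s(x, w) ∈ edgesOn S := mk_mem_edgesOn.2 (by grind)
  refine .makerMove s(x, w) hxwS (by grind) (by grind) ?_
  refine .of_forall_insert ⟨s(x, y), by grind⟩ fun g _ _ => ?_
  rw [Finset.pair_comm]
  refine makerWins_of_cherry hS hx hz (by grind) hxz (by grind) (by grind) ?_
  have hsub : {g, f, s(x, y)} ∩ edgesOn (S.erase x) ⊆ {g, f} := by
    have hxy' : s(x, y) ∉ edgesOn (S.erase x) := by simp [mk_mem_edgesOn]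
    grind
  exact (Finset.card_le_card hsub).trans Finset.card_le_two

theorem MakerWinsSecond.of_forall_sdiff_pair (hS : 3 ≤ S.card)
    (h : ∀ x ∈ S, ∀ z ∈ S, x ≠ z →
      MakerWinsSecond (edgesOn (S \ {x, z})) (perfectMatchingsOn (S \ {x, z}))) :
    MakerWinsSecond (edgesOn S) (perfectMatchingsOn S) := by
  refine makerWinsSecond_of_adjacent_reply hS fun x hx y _ z hz _ hxz _ => ?_
  refine MakerWins.mono (h x hx z hz hxz) (edgesOn_mono Finset.sdiff_subset) le_rfl (by simp) ?_
    fun H hH => ⟨insert s(x, z) H, ?_, by grind⟩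
  · rw [Finset.inter_singleton_of_notMem (by simp [mk_mem_edgesOn])]
  · have hpair : insert x (insert z (S \ {x, z})) = S := by grind
    simpa only [hpair] using insert_mem_perfectMatchingsOn hH (by simp) (by simp) hxz

theorem makerWinsSecond_of_six_le_card (hev : Even S.card) (hS : 6 ≤ S.card) :
    MakerWinsSecond (edgesOn S) (perfectMatchingsOn S) := by
  induction hn : S.card using Nat.strong_induction_on generalizing S with
  | _ n ih =>
    subst hn
    obtain h6 | h8 : S.card = 6 ∨ 8 ≤ S.card := by grind
    · exact makerWinsSecond_of_card_eq_six h6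
    · refine .of_forall_sdiff_pair (by omega) fun x hx z hz hxz => ?_
      have hcard : (S \ {x, z}).card = S.card - 2 := by
        rw [Finset.card_sdiff_of_subset (by grind), Finset.card_pair hxz]
      exact ih _ (by omega) (by grind) (by omega) rfl

theorem perfect_matching_game_general (hev : Even S.card) (hS : 2 ≤ S.card) :
    (MakerWinsFirst (edgesOn S) (perfectMatchingsOn S) ↔ 6 ≤ S.card ∨ S.card = 2) ∧
    (MakerWinsSecond (edgesOn S) (perfectMatchingsOn S) ↔ 6 ≤ S.card) := by
  obtain h2 | h4 | h6 : S.card = 2 ∨ S.card = 4 ∨ 6 ≤ S.card := by grind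
  · simp [h2, makerWinsFirst_of_card_eq_two, not_makerWinsSecond_of_card_eq_two]
  · have hfirst := not_makerWinsFirst_of_card_eq_four h4
    simp [h4, hfirst, mt MakerWinsSecond.makerWinsFirst hfirst]
  · have hsecond := makerWinsSecond_of_six_le_card hev h6
    simp [h6, hsecond, hsecond.makerWinsFirst]

end CompleteGraph

theorem board_eq_edgesOn_univ (n : ℕ) : Board n = edgesOn Finset.univ := by
  ext e
  simp [Board, mem_edgesOn]

theorem perfectMatchings_eq_perfectMatchingsOn_univ (n : ℕ) :
    PerfectMatchings n = perfectMatchingsOn Finset.univ := by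
  ext H
  simp [PerfectMatchings, perfectMatchingsOn, Finset.subset_iff, mem_edgesOn]

/-- In the Maker-Breaker Perfect Matching game on `E(K_n)` with `n ≥ 2` even, Maker as
first player wins iff `n ≥ 6` or `n = 2`, and Maker as second player wins iff `n ≥ 6`. -/
theorem perfect_matching_game (n : ℕ) (hev : Even n) (hn : 2 ≤ n) :
    (MakerWinsFirst (Board n) (PerfectMatchings n) ↔ (6 ≤ n ∨ n = 2)) ∧
    (MakerWinsSecond (Board n) (PerfectMatchings n) ↔ 6 ≤ n) := by
  rw [board_eq_edgesOn_univ, perfectMatchings_eq_perfectMatchingsOn_univ]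
  simpa using perfect_matching_game_general (S := (Finset.univ : Finset (Fin n)))
    (by simpa using hev) (by simpa using hn)
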